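/- If G is a finite bipartite graph with no isolated vertices and maximum degree 5, then š(G) ≤ 23; moreover, if in addition G has a perfect matching, then š(G) ≤ 12. -/

import Mathlib

open SimpleGraph Finset

/-- A proper edge coloring of `G` with colors in `ℕ`: distinct edges of `G`
sharing an endpoint receive distinct colors. -/
def IsProperEdgeColoring {V : Type*} (G : SimpleGraph V) (c : Sym2 V → ℕ) : Prop :=
  ∀ e₁ ∈ G.edgeSet, ∀ e₂ ∈ G.edgeSet, e₁ ≠ e₂ → (∃ v, v ∈ e₁ ∧ v ∈ e₂) → c e₁ ≠ c e₂

/-- The palette of a vertex `v`: the set of colors appearing on edges of `G` incident with `v`. -/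
def palette {V : Type*} (G : SimpleGraph V) (c : Sym2 V → ℕ) (v : V) : Set ℕ :=
  {n | ∃ e ∈ G.edgeSet, v ∈ e ∧ c e = n}

/-- The palette index of `G`: the minimum number of distinct palettes occurring in a
proper edge coloring of `G`. -/
noncomputable def paletteIndex {V : Type*} (G : SimpleGraph V) : ℕ :=
  sInf {k | ∃ c : Sym2 V → ℕ, IsProperEdgeColoring G c ∧ (Set.range (palette G c)).ncard = k}

/-!
Hall's theorem, applied on both sides and combined as in the Schröder–Bernstein theorem, gives a
matching that covers all vertices of degree 5. Its edges get color `0`. The remaining graph has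
degrees at most 4 and its edges are colored by `Bool × Bool`.

The edges of a bipartite graph have a two-coloring that is balanced at every vertex. Pair off the
edges at each vertex, up to one: the two sides give two involutions of the edge set, whose common
orbits are paths and even cycles, so some two-coloring is switched by both. The first coordinate is
such a coloring; the second is balanced at the vertices of degree 2 and on both classes of the first
coordinate at all other vertices. The resulting coloring is proper, and the two colors in a
two-element palette differ in both coordinates. This leaves 12 of the 16 subsets of `Bool × Bool`,
11 of them nonempty. So a vertex covered by the matching has one of 12 palettes and any other vertex
one of 11, which makes 23 in total, and 12 if the matching is perfect.
-/

section Pairing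

variable {E K : Type*}

-- Number the elements `0, …, n - 1` and reverse the order: only a middle element stays put.
lemma exists_involutive_subsingleton_fixedPoints (T : Type*) [Finite T] :
    ∃ τ : T → T, Function.Involutive τ ∧ (Function.fixedPoints τ).Subsingleton := by
  obtain ⟨n, ⟨ε⟩⟩ := Finite.exists_equiv_fin T
  refine ⟨fun t => ε.symm (ε t).rev, fun t => by simp, fun s hs t ht => ε.injective ?_⟩
  have fixed_by_rev (t : T) (ht : ε.symm (ε t).rev = t) : (ε t).rev = ε t := by
    rwa [Equiv.symm_apply_eq] at ht
  have hs := congrArg Fin.val (fixed_by_rev s hs)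
  have ht := congrArg Fin.val (fixed_by_rev t ht)
  rw [Fin.val_rev] at hs ht
  exact Fin.ext (by omega)

lemma exists_involutive_fiberwise (k : E → K) (hk : ∀ x, (k ⁻¹' {x}).Finite) :
    ∃ α : E → E, Function.Involutive α ∧ (∀ e, k (α e) = k e) ∧
      ∀ x, (k ⁻¹' {x} ∩ Function.fixedPoints α).Subsingleton := by
  have (x : K) : Finite (k ⁻¹' {x}) := hk x
  choose τ τ_invol τ_fixed using
    fun x => exists_involutive_subsingleton_fixedPoints (k ⁻¹' {x})
  let α (e : E) : E := τ (k e) ⟨e, rfl⟩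
  have α_eq {x : K} (e : k ⁻¹' {x}) : α e = τ x e := by
    obtain ⟨e, rfl⟩ := e
    rfl
  refine ⟨α, fun e => ?_, fun e => (τ (k e) ⟨e, rfl⟩).2, ?_⟩
  · rw [α_eq (τ (k e) ⟨e, rfl⟩), τ_invol]
  · rintro x a ⟨ha, a_fixed⟩ b ⟨hb, b_fixed⟩
    have fixed_by_τ (e : k ⁻¹' {x}) (he : α e = e) : e ∈ Function.fixedPoints (τ x) :=
      Subtype.ext ((α_eq e).symm.trans he)
    exact congrArg Subtype.val
      (τ_fixed x (fixed_by_τ ⟨a, ha⟩ a_fixed) (fixed_by_τ ⟨b, hb⟩ b_fixed))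

end Pairing

section TwoInvolutions

variable {E : Type*} {α β : Equiv.Perm E}

-- `α` inverts `α * β`, so `(α * β) ^ k` sending `e` to `α e` makes the point halfway along the
-- cycle a fixed point of `α` or of `β`, according to the parity of `k`.
lemma not_sameCycle_mul_of_involutive (hα : Function.Involutive α) (hβ : Function.Involutive β)
    (α_free : ∀ e, α e ≠ e) (β_free : ∀ e, β e ≠ e) (e : E) :
    ¬ (α * β).SameCycle e (α e) := by
  have α_mul_self : α * α = 1 := Equiv.ext hα
  have β_mul_self : β * β = 1 := Equiv.ext hβ
  have conj_eq_inv : α * (α * β) * α⁻¹ = (α * β)⁻¹ := by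
    rw [mul_inv_rev, ← mul_assoc, α_mul_self, one_mul, inv_eq_of_mul_eq_one_left β_mul_self]
  have α_zpow (m : ℤ) : α (((α * β) ^ m) e) = ((α * β) ^ (-m)) (α e) := by
    rw [zpow_neg, ← inv_zpow, ← conj_eq_inv, conj_zpow]
    simp
  rintro ⟨k, hk⟩
  rcases Int.even_or_odd' k with ⟨m, rfl | rfl⟩
  · apply α_free (((α * β) ^ m) e)
    rw [α_zpow, ← hk, ← Equiv.Perm.mul_apply, ← zpow_add]
    congr 2
    ring
  · apply β_free (((α * β) ^ m) e)
    apply α.injective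
    calc α (β (((α * β) ^ m) e)) = ((α * β) ^ (1 + m)) e := by rw [zpow_one_add]; rfl
      _ = ((α * β) ^ (-m)) (α e) := by
        rw [← hk, ← Equiv.Perm.mul_apply, ← zpow_add]
        congr 2
        ring
      _ = α (((α * β) ^ m) e) := (α_zpow m).symm

-- Both involutions interchange the cycle of `e` under `α * β` with the different cycle of `α e`;
-- a linear order on the cycles tells the two apart.
lemma exists_bool_coloring_of_fixedPointFree (hα : Function.Involutive α)
    (hβ : Function.Involutive β) (α_free : ∀ e, α e ≠ e) (β_free : ∀ e, β e ≠ e) :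
    ∃ f : E → Bool, (∀ e, f (α e) = !f e) ∧ ∀ e, f (β e) = !f e := by
  classical
  let cycle : E → Quotient (Equiv.Perm.SameCycle.setoid (α * β)) := Quotient.mk _
  obtain ⟨_, -⟩ := exists_wellFoundedLT (Quotient (Equiv.Perm.SameCycle.setoid (α * β)))
  have cycle_ne (e : E) : cycle e ≠ cycle (α e) := fun h =>
    not_sameCycle_mul_of_involutive hα hβ α_free β_free e (Quotient.exact h)
  have cycle_mul (e : E) : cycle (α (β e)) = cycle e :=
    Quotient.sound ((Equiv.Perm.SameCycle.refl (α * β) e).apply_left)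
  have cycle_β (e : E) : cycle (β e) = cycle (α e) := by
    rw [← cycle_mul (β e), hβ]
  have lt_swap (e : E) :
      decide (cycle (α e) < cycle e) = !decide (cycle e < cycle (α e)) := by
    rw [← decide_not, decide_eq_decide, not_lt]
    exact (cycle_ne e).symm.le_iff_lt.symm
  refine ⟨fun e => decide (cycle e < cycle (α e)), fun e => ?_, fun e => ?_⟩
  · simpa only [hα e] using lt_swap e
  · simpa only [cycle_β, cycle_mul] using lt_swap e

open Classical in
/-- Two copies of an involution with the two copies of each fixed point interchanged. This is a
fixed-point-free involution that still restricts to the original one off the fixed points. -/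
noncomputable def doubleInvolution (α : E → E) (p : E × Bool) : E × Bool :=
  if α p.1 = p.1 then (p.1, !p.2) else (α p.1, p.2)

lemma doubleInvolution_involutive {α : E → E} (hα : Function.Involutive α) :
    Function.Involutive (doubleInvolution α) := by
  rintro ⟨e, b⟩
  by_cases he : α e = e
  · simp [doubleInvolution, he]
  · simp [doubleInvolution, he, hα e, Ne.symm he]

lemma doubleInvolution_ne_self (α : E → E) (p : E × Bool) : doubleInvolution α p ≠ p := by
  by_cases he : α p.1 = p.1 <;> simp [doubleInvolution, he, Prod.ext_iff]

lemma doubleInvolution_of_ne {α : E → E} {e : E} (he : α e ≠ e) (b : Bool) :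
    doubleInvolution α (e, b) = (α e, b) :=
  if_neg he

lemma exists_bool_coloring_of_involutive {α β : E → E} (hα : Function.Involutive α)
    (hβ : Function.Involutive β) :
    ∃ f : E → Bool, (∀ e, α e ≠ e → f (α e) = !f e) ∧ ∀ e, β e ≠ e → f (β e) = !f e := by
  have hα' := doubleInvolution_involutive hα
  have hβ' := doubleInvolution_involutive hβ
  obtain ⟨f, f_α, f_β⟩ := exists_bool_coloring_of_fixedPointFree
    (α := hα'.toPerm) (β := hβ'.toPerm) hα' hβ'
    (doubleInvolution_ne_self α) (doubleInvolution_ne_self β)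
  refine ⟨fun e => f (e, true), fun e he => ?_, fun e he => ?_⟩
  · simpa [doubleInvolution_of_ne he] using f_α (e, true)
  · simpa [doubleInvolution_of_ne he] using f_β (e, true)

end TwoInvolutions

section Balanced

variable {E K : Type*}

/-- A two-coloring is balanced on a finite set when each color is used on at most half of its
elements, rounded up. -/
def IsBalancedOn (f : E → Bool) (S : Set E) : Prop :=
  ∀ b, 2 * (S ∩ f ⁻¹' {b}).ncard ≤ S.ncard + 1

lemma IsBalancedOn.injOn {f : E → Bool} {S : Set E} (hf : IsBalancedOn f S) (hS : S.Finite)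
    (hcard : S.ncard ≤ 2) : Set.InjOn f S := by
  intro a ha c hc hac
  have class_card := hf (f a)
  have class_le_one : (S ∩ f ⁻¹' {f a}).ncard ≤ 1 := by omega
  exact (Set.ncard_le_one (hS.inter_of_left _)).1 class_le_one a ⟨ha, rfl⟩ c ⟨hc, hac.symm⟩

lemma isBalancedOn_of_involutive {α : E → E} {f : E → Bool} {S : Set E}
    (hα : Function.Involutive α) (hαS : Set.MapsTo α S S)
    (hfix : (S ∩ Function.fixedPoints α).Subsingleton)
    (hf : ∀ e, α e ≠ e → f (α e) = !f e) (hS : S.Finite) : IsBalancedOn f S := by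
  intro b
  have class_subset : S ∩ f ⁻¹' {b} ⊆
      α '' (S \ (f ⁻¹' {b})) ∪ (S ∩ Function.fixedPoints α) := by
    rintro e ⟨he, rfl⟩
    by_cases hαe : α e = e
    · exact Or.inr ⟨he, hαe⟩
    · exact Or.inl ⟨α e, ⟨hαS he, by simp [hf e hαe]⟩, hα e⟩
  have hS' : (S \ f ⁻¹' {b}).Finite := hS.sdiff
  have hfix_card : (S ∩ Function.fixedPoints α).ncard ≤ 1 :=
    (Set.ncard_le_one hfix.finite).2 hfix
  have class_le : (S ∩ f ⁻¹' {b}).ncard ≤ (S \ f ⁻¹' {b}).ncard + 1 :=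
    calc (S ∩ f ⁻¹' {b}).ncard
        ≤ (α '' (S \ f ⁻¹' {b}) ∪ (S ∩ Function.fixedPoints α)).ncard :=
          Set.ncard_le_ncard class_subset ((hS'.image α).union (hS.inter_of_left _))
      _ ≤ (α '' (S \ f ⁻¹' {b})).ncard + (S ∩ Function.fixedPoints α).ncard :=
          Set.ncard_union_le _ _
      _ ≤ (S \ f ⁻¹' {b}).ncard + 1 :=
          add_le_add (Set.ncard_image_le hS') hfix_card
  have := Set.ncard_inter_add_ncard_sdiff_eq_ncard S (f ⁻¹' {b}) hS
  omega

lemma exists_isBalancedOn_fibers (k : Bool → E → K) (hk : ∀ i x, (k i ⁻¹' {x}).Finite) :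
    ∃ f : E → Bool, ∀ i x, IsBalancedOn f (k i ⁻¹' {x}) := by
  choose α α_invol k_α α_fixed using fun i => exists_involutive_fiberwise (k i) (hk i)
  obtain ⟨f, f_true, f_false⟩ := exists_bool_coloring_of_involutive (α_invol true) (α_invol false)
  have f_α (i : Bool) (e : E) (he : α i e ≠ e) : f (α i e) = !f e := by
    cases i
    exacts [f_false e he, f_true e he]
  exact ⟨f, fun i x => isBalancedOn_of_involutive (α_invol i)
    (fun e he => (k_α i e).trans he) (α_fixed i x) (f_α i) (hk i x)⟩

end Balanced

section AdmissiblePalettes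

variable {E K : Type*}

/-- The sets of colors from `Bool × Bool` permitted as palettes: all of them except the four
two-element sets whose elements agree in a coordinate. -/
def IsAdmissiblePalette (P : Set (Bool × Bool)) : Prop :=
  P.ncard = 2 → Set.InjOn Prod.fst P ∧ Set.InjOn Prod.snd P

lemma ncard_setOf_isAdmissiblePalette : {P | IsAdmissiblePalette P}.ncard = 12 := by
  let admissible : Finset (Finset (Bool × Bool)) :=
    {s | #s = 2 → #(s.image Prod.fst) = #s ∧ #(s.image Prod.snd) = #s}
  have image_coe :
      {P | IsAdmissiblePalette P} = SetLike.coe '' (admissible : Set (Finset _)) := by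
    ext P
    lift P to Finset (Bool × Bool) using P.toFinite
    simp [admissible, IsAdmissiblePalette, Finset.card_image_iff]
  rw [image_coe, Set.ncard_image_of_injective _ Finset.coe_injective, Set.ncard_coe_finset]
  decide

lemma isAdmissiblePalette_empty : IsAdmissiblePalette ∅ := fun _ => by simp

lemma ncard_setOf_isAdmissiblePalette_and_nonempty :
    {P | IsAdmissiblePalette P ∧ P.Nonempty}.ncard = 11 := by
  have eq_sdiff :
      {P | IsAdmissiblePalette P ∧ P.Nonempty} = {P | IsAdmissiblePalette P} \ {∅} := by
    ext P
    simp [Set.nonempty_iff_ne_empty]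
  rw [eq_sdiff, Set.ncard_sdiff_singleton_of_mem isAdmissiblePalette_empty,
    ncard_setOf_isAdmissiblePalette]

/-- An edge coloring `w` is admissible on the set `S` of edges at a vertex when it is proper there
and the palette it produces is admissible. -/
def IsAdmissibleOn (w : E → Bool × Bool) (S : Set E) : Prop :=
  Set.InjOn w S ∧ IsAdmissiblePalette (w '' S)

lemma isAdmissibleOn_prodMk_of_injOn {y z : E → Bool} {S : Set E} (hy : Set.InjOn y S)
    (hz : Set.InjOn z S) : IsAdmissibleOn (fun e => (y e, z e)) S := by
  refine ⟨fun a ha c hc hac => hy ha hc (congrArg Prod.fst hac), fun _ => ⟨?_, ?_⟩⟩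
  · rintro _ ⟨a, ha, rfl⟩ _ ⟨c, hc, rfl⟩ hac
    rw [hy ha hc hac]
  · rintro _ ⟨a, ha, rfl⟩ _ ⟨c, hc, rfl⟩ hac
    rw [hz ha hc hac]

lemma isAdmissibleOn_prodMk_of_isBalancedOn {y z : E → Bool} {S : Set E} (hS : S.Finite)
    (hcard : S.ncard ≤ 4) (hcard' : S.ncard ≠ 2) (hy : IsBalancedOn y S)
    (hz : ∀ b, IsBalancedOn z (S ∩ y ⁻¹' {b})) : IsAdmissibleOn (fun e => (y e, z e)) S := by
  have hinj : Set.InjOn (fun e => (y e, z e)) S := by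
    intro a ha c hc hac
    obtain ⟨hyac, hzac⟩ := Prod.mk.inj hac
    have class_card := hy (y a)
    exact (hz (y a)).injOn (hS.inter_of_left _) (by omega) ⟨ha, rfl⟩ ⟨hc, hyac.symm⟩ hzac
  exact ⟨hinj, fun h => absurd (hinj.ncard_image ▸ h) hcard'⟩

open Classical in
/-- Splits every fibre of `k` according to the value of `y`, except that fibres with two elements
are left whole. -/
noncomputable def splitKey (k : E → K) (y : E → Bool) (e : E) : K × Bool :=
  (k e, if (k ⁻¹' {k e}).ncard = 2 then true else y e)

lemma splitKey_preimage_of_ncard_eq_two {k : E → K} {x : K} (h : (k ⁻¹' {x}).ncard = 2)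
    (y : E → Bool) : splitKey k y ⁻¹' {(x, true)} = k ⁻¹' {x} := by
  ext e
  simp only [splitKey, Set.mem_preimage, Set.mem_singleton_iff, Prod.mk.injEq]
  refine and_iff_left_of_imp ?_
  rintro rfl
  rw [if_pos h]

lemma splitKey_preimage_of_ncard_ne_two {k : E → K} {x : K} (h : (k ⁻¹' {x}).ncard ≠ 2)
    (y : E → Bool) (b : Bool) : splitKey k y ⁻¹' {(x, b)} = k ⁻¹' {x} ∩ y ⁻¹' {b} := by
  ext e
  simp only [splitKey, Set.mem_preimage, Set.mem_singleton_iff, Prod.mk.injEq, Set.mem_inter_iff]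
  refine and_congr_right ?_
  rintro rfl
  rw [if_neg h]

lemma exists_isAdmissibleOn_fibers (k : Bool → E → K) (hk : ∀ i x, (k i ⁻¹' {x}).Finite)
    (hcard : ∀ i x, (k i ⁻¹' {x}).ncard ≤ 4) :
    ∃ w : E → Bool × Bool, ∀ i x, IsAdmissibleOn w (k i ⁻¹' {x}) := by
  obtain ⟨y, hy⟩ := exists_isBalancedOn_fibers k hk
  have splitKey_finite (i : Bool) (p : K × Bool) : (splitKey (k i) y ⁻¹' {p}).Finite :=
    (hk i p.1).subset fun e he => congrArg Prod.fst he
  obtain ⟨z, hz⟩ := exists_isBalancedOn_fibers (fun i => splitKey (k i) y) splitKey_finite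
  refine ⟨fun e => (y e, z e), fun i x => ?_⟩
  by_cases htwo : (k i ⁻¹' {x}).ncard = 2
  · have hz' : IsBalancedOn z (k i ⁻¹' {x}) :=
      splitKey_preimage_of_ncard_eq_two htwo y ▸ hz i (x, true)
    exact isAdmissibleOn_prodMk_of_injOn ((hy i x).injOn (hk i x) htwo.le)
      (hz'.injOn (hk i x) htwo.le)
  · exact isAdmissibleOn_prodMk_of_isBalancedOn (hk i x) (hcard i x) htwo (hy i x)
      fun b => splitKey_preimage_of_ncard_ne_two htwo y b ▸ hz i (x, b)

end AdmissiblePalettes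

section BipartiteColoring

variable {V : Type*} {G : SimpleGraph V}

lemma existsUnique_mem_edge_color_eq (C : G.Coloring Bool) {e : Sym2 V} (he : e ∈ G.edgeSet)
    (b : Bool) : ∃! v, v ∈ e ∧ C v = b := by
  induction e with | _ u v
  have hne : C u ≠ C v := C.valid he
  by_cases hu : C u = b
  · exact ⟨u, by grind⟩
  · have hv : C v = b := (Bool.eq_not_of_ne hne.symm).trans (Bool.eq_not_of_ne (Ne.symm hu)).symm
    exact ⟨v, by grind⟩

lemma exists_isAdmissibleOn_incidenceSet (C : G.Coloring Bool)
    (hfin : ∀ v, (G.incidenceSet v).Finite) (hcard : ∀ v, (G.incidenceSet v).ncard ≤ 4) :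
    ∃ w : Sym2 V → Bool × Bool, ∀ v, IsAdmissibleOn w (G.incidenceSet v) := by
  choose endpoint endpoint_spec endpoint_unique using
    fun (b : Bool) (e : G.edgeSet) => existsUnique_mem_edge_color_eq C e.2 b
  have fiber_subset (b : Bool) (v : V) :
      Subtype.val '' (endpoint b ⁻¹' {v}) ⊆ G.incidenceSet v := by
    rintro _ ⟨e, rfl, rfl⟩
    exact ⟨e.2, (endpoint_spec b e).1⟩
  have fiber_eq (v : V) : Subtype.val '' (endpoint (C v) ⁻¹' {v}) = G.incidenceSet v :=
    (fiber_subset _ v).antisymm fun e he =>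
      ⟨⟨e, he.1⟩, (endpoint_unique (C v) ⟨e, he.1⟩ v ⟨he.2, rfl⟩).symm, rfl⟩
  have val_injOn (S : Set G.edgeSet) : Set.InjOn Subtype.val S := Subtype.val_injective.injOn
  obtain ⟨w, hw⟩ := exists_isAdmissibleOn_fibers endpoint
    (fun b v => ((hfin v).subset (fiber_subset b v)).of_finite_image (val_injOn _))
    (fun b v => (val_injOn _).ncard_image ▸
      (Set.ncard_le_ncard (fiber_subset b v) (hfin v)).trans (hcard v))
  have extend_comp : Function.extend Subtype.val w (fun _ => default) ∘ Subtype.val = w :=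
    Function.extend_comp Subtype.val_injective w _
  refine ⟨Function.extend Subtype.val w fun _ => default, fun v => ?_⟩
  obtain ⟨w_inj, w_pal⟩ := hw (C v) v
  rw [← extend_comp] at w_inj w_pal
  rw [← fiber_eq]
  exact ⟨w_inj.image_of_comp, Set.image_comp _ _ _ ▸ w_pal⟩

end BipartiteColoring

section AddMatching

variable {V α : Type*} [Encodable α] {G : SimpleGraph V} {M : G.Subgraph} {w : Sym2 V → α}

/-- The colors from `α` as positive integers; `0` is kept for the edges of a matching. -/
def positiveCode (a : α) : ℕ := Encodable.encode a + 1

open Classical in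
/-- The edge coloring that gives color `0` to the edges of `M` and follows `w` elsewhere. -/
noncomputable def addMatching (M : G.Subgraph) (w : Sym2 V → α) (e : Sym2 V) : ℕ :=
  if e ∈ M.edgeSet then 0 else positiveCode (w e)

lemma positiveCode_injective : Function.Injective (positiveCode : α → ℕ) :=
  (add_left_injective 1).comp Encodable.encode_injective

lemma isMatching_edge_unique (hM : M.IsMatching) {e f : Sym2 V} (he : e ∈ M.edgeSet)
    (hf : f ∈ M.edgeSet) {v : V} (hve : v ∈ e) (hvf : v ∈ f) : e = f := by
  obtain ⟨a, rfl⟩ := hve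
  obtain ⟨b, rfl⟩ := hvf
  exact congrArg (s(v, ·)) (hM.eq_of_adj_left he hf)

lemma incidenceSet_deleteEdges (G : SimpleGraph V) (s : Set (Sym2 V)) (v : V) :
    (G.deleteEdges s).incidenceSet v = G.incidenceSet v \ s := by
  ext e
  simp only [incidenceSet, edgeSet_deleteEdges, Set.mem_sdiff, Set.mem_ofPred_eq]
  tauto

lemma isProperEdgeColoring_addMatching (hM : M.IsMatching)
    (hw : ∀ v, Set.InjOn w ((G.deleteEdges M.edgeSet).incidenceSet v)) :
    IsProperEdgeColoring G (addMatching M w) := by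
  simp only [incidenceSet_deleteEdges] at hw
  rintro e he f hf hne ⟨v, hve, hvf⟩ hc
  by_cases heM : e ∈ M.edgeSet <;> by_cases hfM : f ∈ M.edgeSet <;>
    simp only [addMatching, heM, hfM, if_true, if_false] at hc
  · exact hne (isMatching_edge_unique hM heM hfM hve hvf)
  · exact Nat.succ_ne_zero _ hc.symm
  · exact Nat.succ_ne_zero _ hc
  · exact hne (hw v ⟨⟨he, hve⟩, heM⟩ ⟨⟨hf, hvf⟩, hfM⟩ (positiveCode_injective hc))

lemma palette_eq_image_incidenceSet (G : SimpleGraph V) (c : Sym2 V → ℕ) (v : V) :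
    palette G c v = c '' G.incidenceSet v := by
  ext n
  simp only [palette, incidenceSet, Set.mem_image, Set.mem_ofPred_eq, and_assoc]

lemma palette_addMatching (M : G.Subgraph) (w : Sym2 V → α) (v : V) :
    palette G (addMatching M w) v = addMatching M w '' (G.incidenceSet v ∩ M.edgeSet) ∪
      positiveCode '' (w '' (G.deleteEdges M.edgeSet).incidenceSet v) := by
  have off_matching : addMatching M w '' (G.incidenceSet v \ M.edgeSet) =
      positiveCode '' (w '' (G.incidenceSet v \ M.edgeSet)) := by
    rw [Set.image_image]
    exact Set.image_congr fun e he => if_neg he.2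
  rw [palette_eq_image_incidenceSet, incidenceSet_deleteEdges, ← off_matching, ← Set.image_union,
    Set.inter_union_sdiff]

lemma palette_addMatching_of_mem (hM : M.IsMatching) {v : V} (hv : v ∈ M.verts) :
    palette G (addMatching M w) v =
      insert 0 (positiveCode '' (w '' (G.deleteEdges M.edgeSet).incidenceSet v)) := by
  obtain ⟨u, hvu, -⟩ := hM hv
  have on_matching : addMatching M w '' (G.incidenceSet v ∩ M.edgeSet) = {0} := by
    refine Set.eq_singleton_iff_unique_mem.2
      ⟨⟨s(v, u), ⟨⟨hvu.adj_sub, Sym2.mem_mk_left v u⟩, hvu⟩, if_pos hvu⟩, ?_⟩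
    rintro _ ⟨e, ⟨-, he⟩, rfl⟩
    exact if_pos he
  rw [palette_addMatching, on_matching, Set.singleton_union]

lemma palette_addMatching_of_notMem {v : V} (hv : v ∉ M.verts) :
    palette G (addMatching M w) v =
      positiveCode '' (w '' (G.deleteEdges M.edgeSet).incidenceSet v) := by
  have not_in_matching : G.incidenceSet v ∩ M.edgeSet = ∅ :=
    Set.eq_empty_of_forall_notMem fun e he => hv (M.mem_verts_of_mem_edge he.2 he.1.2)
  rw [palette_addMatching, not_in_matching, Set.image_empty, Set.empty_union]

end AddMatching

section MaximumDegreeMatching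

variable {V : Type*} {G : SimpleGraph V} [G.LocallyFinite] {d : ℕ}

-- Hall's condition for a set `s` with union of target sets `T`: each vertex of `s \ T` has degree
-- `d` and all its neighbours lie in `T \ s`, so double counting gives `#(s \ T) ≤ #(T \ s)`.
lemma exists_injective_adj_or_fixed (hd : 0 < d) (hdeg : ∀ v, G.degree v ≤ d) :
    ∃ f : V → V, Function.Injective f ∧
      ∀ v, G.Adj v (f v) ∨ f v = v ∧ G.degree v ≠ d := by
  classical
  let target (v : V) : Finset V :=
    if G.degree v = d then G.neighborFinset v else insert v (G.neighborFinset v)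
  have mem_target (v u : V) : u ∈ target v ↔ G.Adj v u ∨ u = v ∧ G.degree v ≠ d := by
    by_cases h : G.degree v = d <;> simp [target, h, or_comm]
  have hall (s : Finset V) : #s ≤ #(s.biUnion target) := by
    set T := s.biUnion target
    have mem_T {v u : V} (hv : v ∈ s) (huv : G.Adj v u ∨ u = v ∧ G.degree v ≠ d) : u ∈ T :=
      Finset.mem_biUnion.2 ⟨v, hv, (mem_target v u).2 huv⟩
    rw [← Finset.card_sdiff_le_card_sdiff_iff]
    refine Nat.le_of_mul_le_mul_right (Finset.card_mul_le_card_mul G.Adj ?_ ?_) hd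
    · intro v hv
      obtain ⟨hvs, hvT⟩ := Finset.mem_sdiff.1 hv
      have degree_eq : G.degree v = d := by
        by_contra hne
        exact hvT (mem_T hvs (Or.inr ⟨rfl, hne⟩))
      rw [← degree_eq, ← G.card_neighborFinset_eq_degree]
      refine Finset.card_le_card fun u hu => ?_
      have hvu : G.Adj v u := (G.mem_neighborFinset v u).1 hu
      exact Finset.mem_filter.2 ⟨Finset.mem_sdiff.2
        ⟨mem_T hvs (Or.inl hvu), fun hus => hvT (mem_T hus (Or.inl hvu.symm))⟩, hvu⟩
    · intro u _
      refine le_trans (Finset.card_le_card fun v hv => ?_) (hdeg u)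
      exact (G.mem_neighborFinset u v).2 (Finset.mem_filter.1 hv).2.symm
  obtain ⟨f, f_inj, f_target⟩ :=
    (Finset.all_card_le_biUnion_card_iff_exists_injective target).1 hall
  exact ⟨f, f_inj, fun v => (mem_target v (f v)).1 (f_target v)⟩

lemma exists_isMatching_forall_degree_eq_mem_verts (C : G.Coloring Bool) (hd : 0 < d)
    (hdeg : ∀ v, G.degree v ≤ d) :
    ∃ M : G.Subgraph, M.IsMatching ∧ ∀ v, G.degree v = d → v ∈ M.verts := by
  obtain ⟨f, f_inj, hf⟩ := exists_injective_adj_or_fixed hd hdeg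
  obtain ⟨σ, σ_bij, hσ⟩ := Function.Embedding.schroeder_bernstein_of_rel f_inj f_inj
    (fun v u => G.Adj v u ∨ u = v ∧ G.degree v ≠ d) hf fun v => by
      rcases hf v with hv | ⟨hv, hne⟩
      · exact Or.inl hv.symm
      · exact Or.inr ⟨hv.symm, hv.symm ▸ hne⟩
  let s : Set V := {v | C v = true ∧ G.Adj v (σ v)}
  have hdisj : Disjoint s (σ '' s) := by
    rw [Set.disjoint_left]
    rintro _ ⟨hv, -⟩ ⟨u, ⟨hu, hadj⟩, rfl⟩
    exact C.valid hadj (hu.trans hv.symm)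
  obtain ⟨M, M_verts, hM⟩ := Subgraph.IsMatching.exists_of_disjoint_sets_of_equiv hdisj
    (Equiv.Set.image σ s σ_bij.injective) fun v => v.2.2
  refine ⟨M, hM, fun v hv => M_verts ▸ ?_⟩
  cases hCv : C v with
  | true => exact Or.inl ⟨hCv, (hσ v).resolve_right fun h => h.2 hv⟩
  | false =>
    obtain ⟨u, rfl⟩ := σ_bij.surjective v
    have hadj : G.Adj u (σ u) := (hσ u).resolve_right fun h => h.2 (h.1 ▸ hv)
    have hCu : C u = true := Bool.eq_true_of_not_eq_false fun h => C.valid hadj (h.trans hCv.symm)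
    exact Or.inr ⟨u, ⟨hCu, hadj⟩, rfl⟩

end MaximumDegreeMatching

section PaletteCount

variable {V : Type*} {G : SimpleGraph V}

/-- The palettes at vertices covered by the matching: color `0` and an admissible palette. -/
def coveredPalettes : Set (Set ℕ) :=
  (fun P => insert 0 (positiveCode '' P)) '' {P | IsAdmissiblePalette P}

/-- The palettes at non-isolated vertices not covered by the matching. -/
def uncoveredPalettes : Set (Set ℕ) :=
  (fun P => positiveCode '' P) '' {P | IsAdmissiblePalette P ∧ P.Nonempty}

lemma encard_coveredPalettes_le : coveredPalettes.encard ≤ 12 := by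
  refine (Set.encard_image_le _ _).trans_eq ?_
  rw [← (Set.toFinite _).cast_ncard_eq, ncard_setOf_isAdmissiblePalette]
  rfl

lemma encard_uncoveredPalettes_le : uncoveredPalettes.encard ≤ 11 := by
  refine (Set.encard_image_le _ _).trans_eq ?_
  rw [← (Set.toFinite _).cast_ncard_eq, ncard_setOf_isAdmissiblePalette_and_nonempty]
  rfl

lemma encard_coveredPalettes_union_uncoveredPalettes_le :
    (coveredPalettes ∪ uncoveredPalettes).encard ≤ 23 :=
  (Set.encard_union_le _ _).trans
    (add_le_add encard_coveredPalettes_le encard_uncoveredPalettes_le)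

lemma incidenceSet_nonempty_of_degree_pos {v : V} [Fintype (G.neighborSet v)]
    (hv : 0 < G.degree v) : (G.incidenceSet v).Nonempty := by
  obtain ⟨u, hvu⟩ := (G.degree_pos_iff_exists_adj v).1 hv
  exact ⟨s(v, u), hvu, Sym2.mem_mk_left v u⟩

lemma ncard_incidenceSet_deleteEdges_le [G.LocallyFinite] {d : ℕ} {M : G.Subgraph}
    (hM : M.IsMatching) (hdeg : ∀ v, G.degree v ≤ d + 1)
    (hcover : ∀ v, G.degree v = d + 1 → v ∈ M.verts) (v : V) :
    ((G.deleteEdges M.edgeSet).incidenceSet v).ncard ≤ d := by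
  classical
  have hfin : (G.incidenceSet v).Finite := Set.toFinite _
  have ncard_eq : (G.incidenceSet v).ncard = G.degree v := by
    rw [← G.card_incidenceFinset_eq_degree, ← Set.ncard_coe_finset, coe_incidenceFinset]
  rw [incidenceSet_deleteEdges]
  by_cases hv : G.degree v = d + 1
  · obtain ⟨u, hvu, -⟩ := hM (hcover v hv)
    have hlt : (G.incidenceSet v \ M.edgeSet).ncard < (G.incidenceSet v).ncard :=
      Set.ncard_lt_ncard (Set.sdiff_ssubset_left_iff.2
        ⟨s(v, u), ⟨hvu.adj_sub, Sym2.mem_mk_left v u⟩, hvu⟩) hfin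
    omega
  · have hle := Set.ncard_le_ncard (Set.sdiff_subset (s := G.incidenceSet v) (t := M.edgeSet)) hfin
    have := hdeg v
    omega

lemma exists_coloring_palette_mem [G.LocallyFinite] (C : G.Coloring Bool)
    (hiso : ∀ v, 0 < G.degree v) (hdeg : ∀ v, G.degree v ≤ 5) {M : G.Subgraph}
    (hM : M.IsMatching) (hcover : ∀ v, G.degree v = 5 → v ∈ M.verts) :
    ∃ c : Sym2 V → ℕ, IsProperEdgeColoring G c ∧
      (∀ v ∈ M.verts, palette G c v ∈ coveredPalettes) ∧
      ∀ v ∉ M.verts, palette G c v ∈ uncoveredPalettes := by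
  classical
  let C' : (G.deleteEdges M.edgeSet).Coloring Bool := C.comp (.ofLE (G.deleteEdges_le M.edgeSet))
  have hfin (v : V) : ((G.deleteEdges M.edgeSet).incidenceSet v).Finite := by
    rw [incidenceSet_deleteEdges]
    exact (Set.toFinite (G.incidenceSet v)).sdiff
  obtain ⟨w, hw⟩ := exists_isAdmissibleOn_incidenceSet C' hfin
    (ncard_incidenceSet_deleteEdges_le hM hdeg hcover)
  refine ⟨addMatching M w, isProperEdgeColoring_addMatching hM fun v => (hw v).1,
    fun v hv => ?_, fun v hv => ?_⟩
  · rw [palette_addMatching_of_mem hM hv]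
    exact ⟨_, (hw v).2, rfl⟩
  · have palette_nonempty : (palette G (addMatching M w) v).Nonempty := by
      rw [palette_eq_image_incidenceSet]
      exact (incidenceSet_nonempty_of_degree_pos (hiso v)).image _
    rw [palette_addMatching_of_notMem hv] at palette_nonempty ⊢
    exact ⟨_, ⟨(hw v).2, palette_nonempty.of_image⟩, rfl⟩

lemma paletteIndex_le_of_encard_le {c : Sym2 V → ℕ} {n : ℕ} (hc : IsProperEdgeColoring G c)
    (hn : (Set.range (palette G c)).encard ≤ n) : paletteIndex G ≤ n :=
  le_trans (Nat.sInf_le ⟨c, hc, rfl⟩) (ENat.toNat_le_of_le_natCast hn)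

end PaletteCount

/-- The bounds hold for infinite locally finite graphs too. They are stated there with `encard`,
since `paletteIndex` counts palettes with `ncard`, which is `0` on infinite sets. -/
theorem palette_index_bipartite_deg5_general {V : Type*} (G : SimpleGraph V) [G.LocallyFinite]
    (hbip : G.Colorable 2) (hiso : ∀ v : V, 0 < G.degree v) (hdeg : ∀ v : V, G.degree v ≤ 5) :
    (∃ c, IsProperEdgeColoring G c ∧ (Set.range (palette G c)).encard ≤ 23) ∧
      ((∃ M : G.Subgraph, M.IsPerfectMatching) →
        ∃ c, IsProperEdgeColoring G c ∧ (Set.range (palette G c)).encard ≤ 12) := by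
  have C : G.Coloring Bool := hbip.toColoring (by simp)
  constructor
  · obtain ⟨M, hM, hcover⟩ := exists_isMatching_forall_degree_eq_mem_verts C (by simp) hdeg
    obtain ⟨c, hc, covered, uncovered⟩ := exists_coloring_palette_mem C hiso hdeg hM hcover
    refine ⟨c, hc,
      (Set.encard_le_encard ?_).trans encard_coveredPalettes_union_uncoveredPalettes_le⟩
    rintro _ ⟨v, rfl⟩
    by_cases hv : v ∈ M.verts
    · exact Or.inl (covered v hv)
    · exact Or.inr (uncovered v hv)
  · rintro ⟨M, hM, hspan⟩
    obtain ⟨c, hc, covered, -⟩ := exists_coloring_palette_mem C hiso hdeg hM fun v _ => hspan v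
    refine ⟨c, hc, (Set.encard_le_encard ?_).trans encard_coveredPalettes_le⟩
    rintro _ ⟨v, rfl⟩
    exact covered v (hspan v)

/-- If `G` is a bipartite graph with `Δ(G) = 5` and no isolated vertices, then
`š(G) ≤ 23`; moreover if `G` has a perfect matching, then `š(G) ≤ 12`. -/
theorem palette_index_bipartite_deg5 {V : Type*} [Fintype V]
    (G : SimpleGraph V) [DecidableRel G.Adj]
    (hbip : G.Colorable 2)
    (hiso : ∀ v : V, 0 < G.degree v)
    (hmax : G.maxDegree = 5) :
    paletteIndex G ≤ 23 ∧
      ((∃ M : G.Subgraph, M.IsPerfectMatching) → paletteIndex G ≤ 12) := by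
  obtain ⟨⟨c, hc, hn⟩, hperfect⟩ := palette_index_bipartite_deg5_general G hbip hiso
    fun v => hmax ▸ G.degree_le_maxDegree v
  exact ⟨paletteIndex_le_of_encard_le hc hn, fun hM =>
    let ⟨_, hc', hn'⟩ := hperfect hM
    paletteIndex_le_of_encard_le hc' hn'⟩
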